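/- Let T=(V,E) be a leafless directed tree with a root, let 1 < q < ∞, let λ be the constant sequence λ_v = 1 for each v ∈ V, and assume the backward shift B is bounded on L^q(T,λ). If the tree T has no free end, then B is hypercyclic. -/

import Mathlib

open Filter

attribute [local instance] Classical.propDecidable
open scoped ENNReal

/-- A directed tree: a locally finite directed graph on a (countably infinite)
vertex set with no directed circuits, whose underlying undirected graph is
connected, and in which every vertex has indegree at most one. -/
structure DirTree (V : Type) where
  E : V → V → Prop
  finIn : ∀ v : V, {u : V | E u v}.Finite
  finOut : ∀ v : V, {u : V | E v u}.Finite
  noCircuit : ∀ (n : ℕ) (c : Fin (n + 1) → V), Function.Injective c →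
    (∀ i : Fin n, E (c i.castSucc) (c i.succ)) → ¬ E (c (Fin.last n)) (c 0)
  conn : (SimpleGraph.fromRel E).Connected
  indeg : ∀ ⦃u w v : V⦄, E u v → E w v → u = w

namespace DirTree

variable {V : Type} (T : DirTree V)

/-- A root is a vertex of indegree zero. -/
def IsRoot (r : V) : Prop := ∀ u : V, ¬ T.E u r

/-- The set of children of a vertex. -/
def child (u : V) : Set V := {v : V | T.E u v}

/-- A leaf is a vertex of outdegree zero. -/
def IsLeaf (u : V) : Prop := ¬ (T.child u).Nonempty

/-- The (forward) shift `(S f)(v) = f (parent v)`, with `(S f)(root) = 0`. -/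
noncomputable def shift (f : V → ℂ) (v : V) : ℂ :=
  if h : ∃ u : V, T.E u v then f h.choose else 0

/-- The backward shift `(B f)(u) = ∑_{v ∈ child u} f v`. -/
noncomputable def bwd (f : V → ℂ) (u : V) : ℂ :=
  ∑' v : T.child u, f v.1

/-- The operator `(S* g)(u) = ∑_{v ∈ child u} g v · λ_v / λ_u`. -/
noncomputable def sstar (lam : V → ℝ) (g : V → ℂ) (u : V) : ℂ :=
  ∑' v : T.child u, g v.1 * ((lam v.1 / lam u : ℝ) : ℂ)

/-- `childN n u` is the set of vertices `v` with `parentⁿ v = u`. -/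
def childN (T : DirTree V) : ℕ → V → Set V
  | 0, u => {u}
  | n + 1, u => {w : V | ∃ v ∈ T.child u, w ∈ childN T n v}

/-- `γ(u,n)`, the cardinality of `childN n u`. -/
noncomputable def gam (u : V) (n : ℕ) : ℕ := (T.childN n u).ncard

/-- The `n`-th ancestor `parentⁿ u` of `u` (junk value `u` if it does not exist). -/
noncomputable def anc (u : V) (n : ℕ) : V :=
  if h : ∃ w : V, u ∈ T.childN n w then h.choose else u

/-- A leafless directed tree has a free end if some vertex is such that all of
its descendants have outdegree one. -/
def FreeEnd : Prop :=
  ∃ w : V, ∀ n : ℕ, 0 < n → ∀ v ∈ T.childN n w, (T.child v).ncard = 1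

end DirTree

/-- Membership in the weighted space `L^p(T,λ)`. -/
def MemLp' {V : Type} (lam : V → ℝ) (p : ℝ) (f : V → ℂ) : Prop :=
  Summable (fun v => ‖f v‖ ^ p * lam v)

/-- The norm of the weighted space `L^p(T,λ)`. -/
noncomputable def pNorm {V : Type} (lam : V → ℝ) (p : ℝ) (f : V → ℂ) : ℝ :=
  (∑' v, ‖f v‖ ^ p * lam v) ^ (1 / p)

/-- Boundedness of an operator on `L^p(T,λ)`. -/
def BoundedOn {V : Type} (lam : V → ℝ) (p : ℝ) (A : (V → ℂ) → (V → ℂ)) : Prop :=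
  ∃ C : ℝ, 0 ≤ C ∧ ∀ f : V → ℂ, MemLp' lam p f →
    MemLp' lam p (A f) ∧ pNorm lam p (A f) ≤ C * pNorm lam p f

/-- Hypercyclicity of an operator on `L^p(T,λ)`: some `f ∈ L^p(T,λ)` has dense
orbit `{Aⁿ f : n ∈ ℕ}`. -/
def Hypercyclic {V : Type} (lam : V → ℝ) (p : ℝ) (A : (V → ℂ) → (V → ℂ)) : Prop :=
  ∃ f : V → ℂ, MemLp' lam p f ∧ ∀ g : V → ℂ, MemLp' lam p g → ∀ ε : ℝ, 0 < ε →
    ∃ n : ℕ, MemLp' lam p (A^[n] f - g) ∧ pNorm lam p (A^[n] f - g) < ε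

open scoped Topology in
/-- A version of the hypercyclicity criterion. -/
theorem hc_criterion {X : Type*} [NormedAddCommGroup X] [NormedSpace ℂ X] [CompleteSpace X]
    (B : X →L[ℂ] X) (S : Set X) (hS : S.Countable)
    (hd : Dense (Submodule.span ℂ S : Set X))
    (h0 : ∀ x ∈ S, Tendsto (fun n => (B ^ n) x) atTop (𝓝 0))
    (h1 : ∀ y ∈ S, ∃ u : ℕ → X, Tendsto u atTop (𝓝 0) ∧
      Tendsto (fun n => (B ^ n) (u n)) atTop (𝓝 y)) :
    ∃ x, ∀ y, ∀ ε : ℝ, 0 < ε → ∃ n : ℕ, ‖(B ^ n) x - y‖ < ε := by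
  have h0' : ∀ x ∈ Submodule.span ℂ S, Tendsto (fun n => (B ^ n) x) atTop (𝓝 0) := by
    intro x hx
    induction hx using Submodule.span_induction with
    | mem x h => exact h0 x h
    | zero => simp
    | add x y _ _ hx hy => simpa using hx.add hy
    | smul a x _ hx => simpa using hx.const_smul a
  have h1' : ∀ y ∈ Submodule.span ℂ S, ∃ u : ℕ → X, Tendsto u atTop (𝓝 0) ∧
      Tendsto (fun n => (B ^ n) (u n)) atTop (𝓝 y) := by
    intro x hx
    induction hx using Submodule.span_induction with
    | mem x h => exact h1 x h
    | zero => exact ⟨fun _ => 0, by simp, by simp⟩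
    | add x y _ _ hx hy =>
      obtain ⟨u, hu, hu'⟩ := hx
      obtain ⟨w, hw, hw'⟩ := hy
      exact ⟨fun n => u n + w n, by simpa using hu.add hw, by simpa using hu'.add hw'⟩
    | smul a x _ hx =>
      obtain ⟨u, hu, hu'⟩ := hx
      exact ⟨fun n => a • u n, by simpa using hu.const_smul a, by simpa using hu'.const_smul a⟩
  obtain ⟨D, hDc, hDd⟩ : ∃ D : Set X, D.Countable ∧ Dense D := by
    obtain ⟨D, hDc, hD⟩ := hS.isSeparable.span (R := ℂ)
    refine ⟨D, hDc, ?_⟩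
    have := hd.mono hD
    rwa [dense_closure] at this
  have : Countable D := hDc
  have key : Dense (⋂ i : D × ℕ, ⋃ n : ℕ,
      (fun x => (B ^ n) x) ⁻¹' Metric.ball (i.1 : X) (1 / ((i.2 : ℝ) + 1))) := by
    apply dense_iInter_of_isOpen
    · intro i
      exact isOpen_iUnion fun n => Metric.isOpen_ball.preimage (B ^ n).continuous
    · rintro ⟨⟨y, hy⟩, m⟩
      rw [Metric.dense_iff]
      intro x r hr
      obtain ⟨x', hx', hxs⟩ := Metric.dense_iff.1 hd x r hr
      obtain ⟨y', hy', hys⟩ := Metric.dense_iff.1 hd y (1 / ((m : ℝ) + 1)) (by positivity)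
      obtain ⟨u, hu, hu'⟩ := h1' y' hys
      have a1 : Tendsto (fun n => x' + u n) atTop (𝓝 x') := by
        simpa using (tendsto_const_nhds (x := x')).add hu
      have a2 : Tendsto (fun n => (B ^ n) (x' + u n)) atTop (𝓝 y') := by
        simpa using (h0' x' hxs).add hu'
      obtain ⟨n, hn1, hn2⟩ := ((a1.eventually (Metric.isOpen_ball.mem_nhds hx')).and
        (a2.eventually (Metric.isOpen_ball.mem_nhds hy'))).exists
      exact ⟨x' + u n, hn1, Set.mem_iUnion.2 ⟨n, hn2⟩⟩
  obtain ⟨x, hx⟩ := key.nonempty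
  refine ⟨x, fun y ε hε => ?_⟩
  obtain ⟨m, hm⟩ := exists_nat_one_div_lt (half_pos hε)
  obtain ⟨d, hd1, hd2⟩ := Metric.dense_iff.1 hDd y (ε / 2) (half_pos hε)
  obtain ⟨n, hn⟩ := Set.mem_iUnion.1 (Set.mem_iInter.1 hx (⟨d, hd2⟩, m))
  refine ⟨n, ?_⟩
  rw [← dist_eq_norm]
  have e1 : dist ((B ^ n) x) d < 1 / ((m : ℝ) + 1) := hn
  have e2 : dist d y < ε / 2 := hd1
  linarith [dist_triangle ((B ^ n) x) d y]

namespace DirTree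

variable {V : Type} (T : DirTree V)

theorem child_finite (u : V) : (T.child u).Finite := T.finOut u

theorem childN_succ' (n : ℕ) (u : V) :
    T.childN (n + 1) u = {w | ∃ v ∈ T.childN n u, T.E v w} := by
  induction n generalizing u with
  | zero => ext w; simp [childN, child]
  | succ n ih =>
    ext w
    constructor
    · rintro ⟨v, hv, hw⟩
      rw [ih] at hw
      obtain ⟨z, hz, hzw⟩ := hw
      exact ⟨z, ⟨v, hv, hz⟩, hzw⟩
    · rintro ⟨z, ⟨v, hv, hz⟩, hzw⟩
      refine ⟨v, hv, ?_⟩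
      rw [ih]
      exact ⟨z, hz, hzw⟩

theorem childN_add {m n : ℕ} {u v w : V} (h1 : v ∈ T.childN m u) (h2 : w ∈ T.childN n v) :
    w ∈ T.childN (m + n) u := by
  induction n generalizing w with
  | zero =>
    have : w = v := h2
    simpa [this] using h1
  | succ n ih =>
    rw [childN_succ'] at h2
    obtain ⟨z, hz, hzw⟩ := h2
    rw [← add_assoc, childN_succ']
    exact ⟨z, ih hz, hzw⟩

theorem childN_finite (n : ℕ) (u : V) : (T.childN n u).Finite := by
  induction n generalizing u with
  | zero => exact Set.finite_singleton u
  | succ n ih =>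
    have : T.childN (n + 1) u = ⋃ v ∈ T.child u, T.childN n v := by
      ext w; simp [childN]
    rw [this]
    exact (T.child_finite u).biUnion fun v _ => ih v

theorem childN_nonempty (hl : ∀ u : V, ¬ T.IsLeaf u) (n : ℕ) (u : V) :
    (T.childN n u).Nonempty := by
  induction n generalizing u with
  | zero => exact ⟨u, rfl⟩
  | succ n ih =>
    obtain ⟨v, hv⟩ := not_not.1 (hl u)
    obtain ⟨w, hw⟩ := ih v
    exact ⟨w, v, hv, hw⟩

theorem gam_step (hl : ∀ u : V, ¬ T.IsLeaf u) (n : ℕ) (u : V) :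
    T.gam u n ≤ T.gam u (n + 1) ∧
    ((∃ v ∈ T.childN n u, (T.child v).ncard ≠ 1) → T.gam u n < T.gam u (n + 1)) := by
  choose c hc using fun v => not_not.1 (hl v)
  have hinj : Function.Injective c := by
    intro a b hab
    have h := hc b
    rw [← hab] at h
    exact T.indeg (hc a) h
  have hsub : c '' T.childN n u ⊆ T.childN (n + 1) u := by
    rintro _ ⟨v, hv, rfl⟩
    rw [childN_succ']
    exact ⟨v, hv, hc v⟩
  have hcard : (c '' T.childN n u).ncard = T.gam u n :=
    Set.ncard_image_of_injective _ hinj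
  constructor
  · rw [← hcard]
    exact Set.ncard_le_ncard hsub (T.childN_finite _ _)
  · rintro ⟨v, hv, hv1⟩
    rw [← hcard]
    apply Set.ncard_lt_ncard _ (T.childN_finite _ _)
    refine ⟨hsub, fun hcon => hv1 ?_⟩
    rw [Set.ncard_eq_one]
    refine ⟨c v, Set.eq_singleton_iff_unique_mem.2 ⟨hc v, fun w hw => ?_⟩⟩
    have : w ∈ T.childN (n + 1) u := by
      rw [childN_succ']; exact ⟨v, hv, hw⟩
    obtain ⟨z, _, rfl⟩ := hcon this
    rw [T.indeg (hc z) hw]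

theorem gam_tendsto (hl : ∀ u : V, ¬ T.IsLeaf u) (hfe : ¬ T.FreeEnd) (u : V) :
    Tendsto (T.gam u) atTop atTop := by
  have hmono : Monotone (T.gam u) := monotone_nat_of_le_succ fun n => (T.gam_step hl n u).1
  refine tendsto_atTop_atTop_of_monotone hmono fun N => ?_
  induction N with
  | zero => exact ⟨0, Nat.zero_le _⟩
  | succ N ih =>
    obtain ⟨n, hn⟩ := ih
    obtain ⟨w, hw⟩ := T.childN_nonempty hl n u
    unfold FreeEnd at hfe
    push Not at hfe
    obtain ⟨m, _, v, hv, hv1⟩ := hfe w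
    refine ⟨n + m + 1, ?_⟩
    have h1 := (T.gam_step hl (n + m) u).2 ⟨v, T.childN_add hw hv, hv1⟩
    have h2 := hmono (Nat.le_add_right n m)
    omega

theorem bwd_add (f g : V → ℂ) : T.bwd (f + g) = T.bwd f + T.bwd g := by
  funext u
  have : Finite (T.child u) := T.child_finite u
  have := Fintype.ofFinite (T.child u)
  simp [bwd, tsum_fintype, Finset.sum_add_distrib]

theorem bwd_smul (a : ℂ) (f : V → ℂ) : T.bwd (a • f) = a • T.bwd f := by
  funext u
  have : Finite (T.child u) := T.child_finite u
  have := Fintype.ofFinite (T.child u)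
  simp [bwd, tsum_fintype, Finset.mul_sum]

theorem bwd_single {u v : V} (h : T.E u v) : T.bwd (Pi.single v 1) = Pi.single u 1 := by
  funext w
  unfold bwd
  by_cases hw : w = u
  · subst hw
    rw [tsum_eq_single (⟨v, h⟩ : T.child w)]
    · simp
    · rintro ⟨b, hb⟩ hne
      have : b ≠ v := fun e => hne (Subtype.ext e)
      simp [this]
  · rw [Pi.single_eq_of_ne hw]
    convert tsum_zero with b
    have : (b : V) ≠ v := fun e => hw (T.indeg (e ▸ b.2 : T.E w v) h)
    simp [this]

theorem bwd_single_root {r : V} (h : T.IsRoot r) : T.bwd (Pi.single r 1) = 0 := by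
  funext w
  unfold bwd
  rw [Pi.zero_apply]
  convert tsum_zero with b
  have : (b : V) ≠ r := fun e => h w (e ▸ b.2 : T.E w r)
  simp [this]

end DirTree

open scoped Topology in
theorem stmt_10_aux {V : Type} [Countable V] (T : DirTree V)
    (hleafless : ∀ u : V, ¬ T.IsLeaf u) (hroot : ∃ r : V, T.IsRoot r)
    (q : ℝ) (hq : 1 < q) (p : ℝ≥0∞) (hp : p.toReal = q) (hpt : p ≠ ⊤) [Fact (1 ≤ p)]
    (hfe : ¬ T.FreeEnd)
    (B : lp (fun _ : V => ℂ) p →L[ℂ] lp (fun _ : V => ℂ) p)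
    (hB : ∀ f, (B f : V → ℂ) = T.bwd f) :
    ∃ x, ∀ y, ∀ ε : ℝ, 0 < ε → ∃ n : ℕ, ‖(B ^ n) x - y‖ < ε := by
  let e : V → lp (fun _ : V => ℂ) p := fun v => lp.single p v (1 : ℂ)
  have he : ∀ {u v : V}, T.E u v → B (e v) = e u := by
    intro u v h
    apply lp.ext
    rw [hB]
    exact T.bwd_single h
  have her : ∀ {r : V}, T.IsRoot r → B (e r) = 0 := by
    intro r h
    apply lp.ext
    rw [hB]
    exact T.bwd_single_root h
  have hne : ∀ v, e v ≠ 0 := by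
    intro v h
    have h2 : (e v : V → ℂ) v = 0 := by rw [h]; rfl
    simp [e] at h2
  have hsucc : ∀ n x, (B ^ (n + 1)) x = (B ^ n) (B x) := fun n x => by
    rw [pow_succ]; rfl
  have hsucc' : ∀ n x, (B ^ (n + 1)) x = B ((B ^ n) x) := fun n x => by
    rw [pow_succ']; rfl
  have hkill : ∀ v, ∃ n, (B ^ n) (e v) = 0 := by
    obtain ⟨r, hr⟩ := hroot
    intro v
    obtain ⟨w⟩ := T.conn.preconnected v r
    induction w with
    | nil => exact ⟨1, by simpa using her hr⟩
    | cons hadj _ ih =>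
      obtain ⟨n, hn⟩ := ih hr
      rw [SimpleGraph.fromRel_adj] at hadj
      rcases hadj.2 with h | h
      · cases n with
        | zero => exact absurd (by simpa using hn) (hne _)
        | succ n => exact ⟨n, by rw [hsucc, he h] at hn; exact hn⟩
      · exact ⟨n + 1, by rw [hsucc, he h]; exact hn⟩
  have hdesc : ∀ n u, ∀ w ∈ T.childN n u, (B ^ n) (e w) = e u := by
    intro n
    induction n with
    | zero => intro u w hw; have : w = u := hw; simp [this]
    | succ n ih =>
      rintro u w ⟨v, hv, hw⟩
      rw [hsucc', ih v w hw, he hv]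
  have hq0 : 0 < q := by linarith
  refine hc_criterion B (Set.range e) (Set.countable_range e) ?_ ?_ ?_
  · intro f
    refine mem_closure_of_tendsto (lp.hasSum_single hpt f) (Eventually.of_forall fun s => ?_)
    refine Submodule.sum_mem _ fun i _ => ?_
    have : lp.single p i (f i : ℂ) = (f i : ℂ) • e i := by
      rw [← lp.single_smul]; simp
    rw [this]
    exact Submodule.smul_mem _ _ (Submodule.subset_span ⟨i, rfl⟩)
  · rintro _ ⟨v, rfl⟩
    obtain ⟨N, hN⟩ := hkill v
    refine tendsto_const_nhds.congr' ?_
    filter_upwards [eventually_ge_atTop N] with n hn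
    obtain ⟨k, rfl⟩ := Nat.exists_eq_add_of_le' hn
    rw [pow_add]
    simp [hN]
  · rintro _ ⟨v, rfl⟩
    let s : ℕ → Finset V := fun n => (T.childN_finite n v).toFinset
    have hs : ∀ n, (s n).card = T.gam v n := fun n =>
      (Set.ncard_eq_toFinset_card _ (T.childN_finite n v)).symm
    have hpos : ∀ n, 0 < T.gam v n := fun n =>
      (Set.ncard_pos (T.childN_finite n v)).2 (T.childN_nonempty hleafless n v)
    let u : ℕ → lp (fun _ : V => ℂ) p := fun n =>
      ∑ w ∈ s n, lp.single p w ((T.gam v n : ℂ)⁻¹)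
    have hnorm : ∀ n, ‖u n‖ = ((T.gam v n : ℝ) ^ (-((q - 1) / q))) := by
      intro n
      have h1 : ‖u n‖ ^ p.toReal = _ :=
        lp.norm_sum_single (E := fun _ : V => ℂ) (by rw [hp]; exact hq0)
          (fun _ => ((T.gam v n : ℂ)⁻¹)) (s n)
      have hg : (0 : ℝ) < T.gam v n := by exact_mod_cast hpos n
      rw [hp, Finset.sum_const, hs, nsmul_eq_mul, norm_inv, Complex.norm_natCast,
        Real.inv_rpow hg.le, ← Real.rpow_neg hg.le] at h1
      have h2 : (T.gam v n : ℝ) * (T.gam v n : ℝ) ^ (-q) = (T.gam v n : ℝ) ^ (1 - q) := by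
        rw [sub_eq_add_neg, Real.rpow_add hg, Real.rpow_one]
      rw [h2] at h1
      rw [← Real.rpow_rpow_inv (norm_nonneg (u n)) hq0.ne', h1, ← Real.rpow_mul hg.le]
      congr 1
      field_simp
      ring
    refine ⟨u, ?_, ?_⟩
    · rw [tendsto_zero_iff_norm_tendsto_zero]
      simp_rw [hnorm]
      exact (tendsto_rpow_neg_atTop (div_pos (by linarith) hq0)).comp
        (tendsto_natCast_atTop_atTop.comp (T.gam_tendsto hleafless hfe v))
    · refine tendsto_const_nhds.congr fun n => ?_
      have hg : (T.gam v n : ℂ) ≠ 0 := by exact_mod_cast (hpos n).ne'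
      have h3 : ∀ w ∈ s n, (B ^ n) (lp.single p w ((T.gam v n : ℂ)⁻¹))
          = (T.gam v n : ℂ)⁻¹ • e v := by
        intro w hw
        have : lp.single p w ((T.gam v n : ℂ)⁻¹) = (T.gam v n : ℂ)⁻¹ • e w := by
          rw [← lp.single_smul]; simp
        rw [this, map_smul, hdesc n v w (by simpa [s] using hw)]
      change e v = (B ^ n) (∑ w ∈ s n, lp.single p w ((T.gam v n : ℂ)⁻¹))
      rw [map_sum, Finset.sum_congr rfl h3, Finset.sum_const, hs, ← Nat.cast_smul_eq_nsmul ℂ,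
        smul_smul, mul_inv_cancel₀ hg, one_smul]

/-- For a leafless rooted directed tree, `1 < q < ∞`, constant
weights `λ_v = 1`, and bounded backward shift `B` on `L^q`: if the tree has no
free end, then `B` is hypercyclic. -/
theorem stmt_10 {V : Type} [Countable V] [Infinite V] (T : DirTree V)
    (hleafless : ∀ u : V, ¬ T.IsLeaf u) (hroot : ∃ r : V, T.IsRoot r)
    (q : ℝ) (hq : 1 < q)
    (hb : BoundedOn (fun _ : V => (1 : ℝ)) q T.bwd)
    (hfe : ¬ T.FreeEnd) :
    Hypercyclic (fun _ : V => (1 : ℝ)) q T.bwd := by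
  let p : ℝ≥0∞ := ENNReal.ofReal q
  have hq0 : 0 < q := by linarith
  have hp : p.toReal = q := ENNReal.toReal_ofReal hq0.le
  have hp0 : 0 < p.toReal := by rw [hp]; exact hq0
  have hpt : p ≠ ⊤ := ENNReal.ofReal_ne_top
  have : Fact (1 ≤ p) := ⟨by simpa [p] using hq.le⟩
  have hmem : ∀ f : V → ℂ, MemLp' (fun _ : V => (1 : ℝ)) q f ↔ Memℓp f p := by
    intro f
    rw [memℓp_gen_iff hp0, hp]
    simp [MemLp']
  have hnorm : ∀ f : lp (fun _ : V => ℂ) p,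
      pNorm (fun _ : V => (1 : ℝ)) q (f : V → ℂ) = ‖f‖ := by
    intro f
    rw [lp.norm_eq_tsum_rpow hp0, hp]
    simp [pNorm]
  obtain ⟨C, hC, hbd⟩ := hb
  let L : lp (fun _ : V => ℂ) p →ₗ[ℂ] lp (fun _ : V => ℂ) p :=
    { toFun := fun f => ⟨T.bwd f, (hmem _).1 (hbd f ((hmem _).2 f.2)).1⟩
      map_add' := fun f g => lp.ext (T.bwd_add f g)
      map_smul' := fun a f => lp.ext (T.bwd_smul a f) }
  let B := L.mkContinuous C (fun f => by
    have := (hbd f ((hmem _).2 f.2)).2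
    rw [hnorm f] at this
    rw [← hnorm (L f)]
    exact this)
  have hB : ∀ f, (B f : V → ℂ) = T.bwd f := fun f => rfl
  have hBn : ∀ n f, ((B ^ n) f : V → ℂ) = T.bwd^[n] f := by
    intro n f
    induction n with
    | zero => rfl
    | succ n ih =>
      rw [Function.iterate_succ_apply', ← ih, ← hB, pow_succ']
      rfl
  obtain ⟨x, hx⟩ := stmt_10_aux T hleafless hroot q hq p hp hpt hfe B hB
  refine ⟨x, (hmem _).2 x.2, fun g hg ε hε => ?_⟩
  obtain ⟨n, hn⟩ := hx ⟨g, (hmem g).1 hg⟩ ε hε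
  have e1 : T.bwd^[n] (x : V → ℂ) - g =
      (((B ^ n) x - ⟨g, (hmem g).1 hg⟩ : lp (fun _ : V => ℂ) p) : V → ℂ) := by
    rw [← hBn]
    rfl
  refine ⟨n, ?_, ?_⟩
  · rw [e1]
    exact (hmem _).2 (lp.memℓp _)
  · rw [e1, hnorm]
    exact hn
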